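/- If A_2(8, 4, 4) ≥ 4801, then A_2(12, 4, 4) ≥ 19673822 = 4801·2^{12} + 1 + 8925. -/

import Mathlib

open Module

/-- The subspace distance `d_S(U, W) = dim(U + W) − dim(U ∩ W)`. -/
noncomputable def subspaceDist {F : Type*} [Field F] {n : ℕ}
    (U W : Submodule F (Fin n → F)) : ℕ :=
  finrank F ↥(U ⊔ W) - finrank F ↥(U ⊓ W)

/-- `A_q(n, d, k)`: the maximum size of an `(n, M, d, k)_q` constant dimension code, i.e.
of a set of `k`-dimensional subspaces of `F_q^n` with pairwise subspace distance
at least `d`. -/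
noncomputable def maxCDCSize (F : Type*) [Field F] [Fintype F] (n d k : ℕ) : ℕ :=
  sSup {M | ∃ C : Finset (Submodule F (Fin n → F)), C.card = M ∧
    (∀ U ∈ C, finrank F ↥U = k) ∧
    ∀ U ∈ C, ∀ W ∈ C, U ≠ W → d ≤ subspaceDist U W}

/-!
Split `F^(n+k)` as `W × S` with `dim W = n` and `dim S = k`. Put maps from a Gabidulin code on each
codeword `X` of an optimal code in `W`: their graphs in `X × S` form a code that is `q^(k(r+1))`
times larger. A map `g : S → W` of rank at most `r` has a graph meeting each of these subspaces in
dimension at most `r`, since the projection to `W` is injective on the latter; so a rank-metric code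
of such maps enlarges the code.

For `k = 4` and `r = 2`, let `W` be the field `K` of degree `n` over `F`. Choose maps `ρ i j` from
`S` onto a plane `L i` of `K` with kernel `P i j`, where the planes `P i j` are distinct, those with
the same `i` are disjoint, and the `L i` lie in distinct orbits of `Kˣ`. The kernel of a difference
`x • ρ i j - x' • ρ i' j'` has dimension at most
`dim (x • L i ∩ x' • L i') + dim (P i j ∩ P i' j')`, which is at most `1 + 1` for `i ≠ i'` and at
most `2 + 0` for `i = i'`, `j ≠ j'`; for `(i, j) = (i', j')` the kernel is `P i j`. Together with
`0` these are `|ι| |κ| (q^n - 1) + 1` maps. Over `F_2` the 35 planes of `F_2^4` split into 7 spreads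
of 5, and `K` has 7 orbits of planes as soon as `n ≥ 6`.
-/

open LinearMap Pointwise

section LinearAlgebra

variable {F V W U S : Type*} [Field F] [AddCommGroup U] [Module F U] [AddCommGroup V] [Module F V]
  [AddCommGroup W] [Module F W] [AddCommGroup S] [Module F S]

theorem finrank_inf_lt_of_ne [FiniteDimensional F V] {A B : Submodule F V}
    (hAB : finrank F A = finrank F B) (hne : A ≠ B) : finrank F ↥(A ⊓ B) < finrank F A := by
  refine Submodule.finrank_lt_finrank_of_lt (inf_le_left.lt_of_ne fun h => hne ?_)
  exact Submodule.eq_of_le_of_finrank_eq (inf_eq_left.mp h) hAB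

theorem finrank_inf_le_of_disjoint_ker [FiniteDimensional F W] {p : V →ₗ[F] W}
    {X : Submodule F V} (Y : Submodule F V) (hX : Disjoint X (ker p)) :
    finrank F ↥(X ⊓ Y) ≤ finrank F ↥(X.map p ⊓ Y.map p) := by
  let f : ↥(X ⊓ Y) →ₗ[F] ↥(X.map p ⊓ Y.map p) :=
    p.restrict fun _ hx => ⟨Submodule.mem_map_of_mem hx.1, Submodule.mem_map_of_mem hx.2⟩
  refine finrank_le_finrank_of_injective (f := f) ?_
  intro x y hxy
  exact Subtype.ext (injOn_of_disjoint_ker le_rfl hX x.2.1 y.2.1 (congrArg Subtype.val hxy))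

theorem finrank_range_inf_range_le [FiniteDimensional F U] {u v : U →ₗ[F] V} {f g : U →ₗ[F] S}
    (h : ∀ x y, u x = v y → x = y ∧ f x = g x) :
    finrank F ↥(range u ⊓ range v) ≤ finrank F (ker (f - g)) := by
  have hle : range u ⊓ range v ≤ (ker (f - g)).map u := by
    rintro _ ⟨⟨x, rfl⟩, y, hy⟩
    exact ⟨x, sub_eq_zero.mpr (h x y hy.symm).2, rfl⟩
  exact (Submodule.finrank_mono hle).trans (Submodule.finrank_map_le u _)

theorem finrank_ker_sub_le [FiniteDimensional F S] [FiniteDimensional F W] (f g : S →ₗ[F] W) :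
    finrank F (ker (f - g)) ≤
      finrank F ↥(range f ⊓ range g) + finrank F ↥(ker f ⊓ ker g) := by
  set N := ker (f - g)
  have hN : ∀ x ∈ N, f x = g x := fun x hx => sub_eq_zero.mp hx
  rw [← finrank_range_add_finrank_ker (f.domRestrict N), range_domRestrict, ker_domRestrict,
    ← Submodule.finrank_map_subtype_eq, Submodule.map_comap_subtype]
  gcongr
  · refine Submodule.finrank_mono (le_inf (map_le_range) ?_)
    rintro _ ⟨x, hx, rfl⟩
    exact ⟨x, (hN x hx).symm⟩
  · exact Submodule.finrank_mono fun x ⟨hxN, hxf⟩ => ⟨hxf, (hN x hxN).symm.trans hxf⟩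

theorem exists_ker_eq_range_eq [FiniteDimensional F V] [FiniteDimensional F S]
    {P : Submodule F S} {L : Submodule F V} (h : finrank F P + finrank F L = finrank F S) :
    ∃ f : S →ₗ[F] V, ker f = P ∧ range f = L := by
  have hPL : finrank F (S ⧸ P) = finrank F L := by
    have := P.finrank_quotient_add_finrank
    omega
  let e : (S ⧸ P) ≃ₗ[F] L := LinearEquiv.ofFinrankEq _ _ hPL
  refine ⟨L.subtype ∘ₗ e.toLinearMap ∘ₗ P.mkQ, ?_, ?_⟩
  · rw [ker_comp_of_ker_eq_bot _ L.ker_subtype, ker_comp_of_ker_eq_bot _ e.ker, P.ker_mkQ]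
  · rw [range_comp, range_comp, P.range_mkQ, Submodule.map_top, e.range, Submodule.map_top,
      L.range_subtype]

end LinearAlgebra

section Codes

variable {F V V' W U S ι κ ν : Type*} [Field F] [AddCommGroup V] [Module F V]
  [AddCommGroup V'] [Module F V'] [AddCommGroup W] [Module F W] [AddCommGroup U] [Module F U]
  [AddCommGroup S] [Module F S]

/-- A constant dimension code of minimum subspace distance at least `2 * (k - r)`, given as a family
of `k`-dimensional subspaces; the distance is encoded by the bound `r` on the dimensions of the
pairwise intersections. -/
def IsConstantDimensionCode (r k : ℕ) (L : ι → Submodule F V) : Prop :=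
  (∀ a, finrank F (L a) = k) ∧ Pairwise fun a b => finrank F ↥(L a ⊓ L b) ≤ r

/-- A rank-metric code of minimum rank distance at least `finrank F U - r`, given as a family of
linear maps; the distance is encoded by the bound `r` on the dimensions of the kernels of the
pairwise differences. -/
def IsRankMetricCode (r : ℕ) (f : ι → U →ₗ[F] S) : Prop :=
  Pairwise fun a b => finrank F (ker (f a - f b)) ≤ r

theorem IsConstantDimensionCode.map {r k : ℕ} {L : ι → Submodule F V}
    (hL : IsConstantDimensionCode r k L) (e : V ≃ₗ[F] V') :
    IsConstantDimensionCode r k fun a => (L a).map e.toLinearMap := by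
  refine ⟨fun a => (e.finrank_map_eq _).trans (hL.1 a), fun a b hab => ?_⟩
  dsimp only
  rw [← Submodule.map_inf _ e.injective]
  exact (e.finrank_map_eq _).trans_le (hL.2 hab)

theorem IsRankMetricCode.comp {r : ℕ} {f : ι → U →ₗ[F] S} (hf : IsRankMetricCode r f)
    {σ : κ → ι} (hσ : Function.Injective σ) : IsRankMetricCode r (f ∘ σ) :=
  fun _ _ hab => hf (hσ.ne hab)

theorem IsRankMetricCode.arrowCongr {r : ℕ} {f : ι → V →ₗ[F] W} (hf : IsRankMetricCode r f)
    (φ : V ≃ₗ[F] U) (ψ : W ≃ₗ[F] S) : IsRankMetricCode r fun a => φ.arrowCongr ψ (f a) := by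
  intro a b hab
  have hker : ker (φ.arrowCongr ψ (f a) - φ.arrowCongr ψ (f b)) =
      (ker (f a - f b)).map φ.toLinearMap := by
    rw [← map_sub]
    ext x
    simp [LinearEquiv.arrowCongr_apply, Submodule.map_equiv_eq_comap_symm, sub_eq_zero]
  dsimp only
  rw [hker]
  exact (φ.finrank_map_eq _).trans_le (hf hab)

theorem IsConstantDimensionCode.injective {r k : ℕ} (hr : r < k) {L : ι → Submodule F V}
    (hL : IsConstantDimensionCode r k L) : Function.Injective L := by
  intro a b hab
  by_contra hne
  have h : finrank F ↥(L a ⊓ L b) ≤ r := hL.2 hne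
  rw [← hab, inf_idem, hL.1] at h
  omega

theorem IsConstantDimensionCode.comp {r k : ℕ} {L : ι → Submodule F V}
    (hL : IsConstantDimensionCode r k L) {σ : κ → ι} (hσ : Function.Injective σ) :
    IsConstantDimensionCode r k (L ∘ σ) :=
  ⟨fun a => hL.1 (σ a), fun _ _ hab => hL.2 (hσ.ne hab)⟩

theorem le_subspaceDist_iff {n r k : ℕ} (hr : r ≤ k) {X Y : Submodule F (Fin n → F)}
    (hX : finrank F X = k) (hY : finrank F Y = k) :
    2 * (k - r) ≤ subspaceDist X Y ↔ finrank F ↥(X ⊓ Y) ≤ r := by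
  have hsum := Submodule.finrank_sup_add_finrank_inf_eq X Y
  have hle := Submodule.finrank_mono (inf_le_left : X ⊓ Y ≤ X)
  unfold subspaceDist
  omega

theorem bddAbove_cdcSizes (F : Type*) [Field F] [Finite F] (n d k : ℕ) :
    BddAbove {M | ∃ C : Finset (Submodule F (Fin n → F)), C.card = M ∧
      (∀ U ∈ C, finrank F ↥U = k) ∧
      ∀ U ∈ C, ∀ W ∈ C, U ≠ W → d ≤ subspaceDist U W} := by
  have := Fintype.ofFinite (Submodule F (Fin n → F))
  refine ⟨Fintype.card (Submodule F (Fin n → F)), ?_⟩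
  rintro _ ⟨C, rfl, -⟩
  exact C.card_le_univ

theorem IsConstantDimensionCode.card_le_maxCDCSize [Fintype F] [FiniteDimensional F V]
    [Finite ι] {n r k : ℕ} (hV : finrank F V = n) (hr : r < k) {L : ι → Submodule F V}
    (hL : IsConstantDimensionCode r k L) :
    Nat.card ι ≤ maxCDCSize F n (2 * (k - r)) k := by
  classical
  have := Fintype.ofFinite ι
  let e : V ≃ₗ[F] (Fin n → F) := LinearEquiv.ofFinrankEq _ _ (by simp [hV])
  let L' a := (L a).map e.toLinearMap
  have hL' : IsConstantDimensionCode r k L' := hL.map e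
  refine le_csSup (bddAbove_cdcSizes F n _ k) ⟨Finset.univ.image L', ?_, ?_, ?_⟩
  · rw [Finset.card_image_of_injective _ (hL'.injective hr), Finset.card_univ,
      Nat.card_eq_fintype_card]
  · simpa using hL'.1
  · simp only [Finset.mem_image, Finset.mem_univ, true_and]
    rintro _ ⟨a, rfl⟩ _ ⟨b, rfl⟩ hne
    exact (le_subspaceDist_iff hr.le (hL'.1 a) (hL'.1 b)).mpr
      (hL'.2 fun hab => hne (congrArg _ hab))

theorem exists_isConstantDimensionCode [Fintype F] [FiniteDimensional F V] {n r k : ℕ}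
    (hV : finrank F V = n) (hr : r ≤ k) :
    ∃ C : Fin (maxCDCSize F n (2 * (k - r)) k) → Submodule F V,
      IsConstantDimensionCode r k C := by
  obtain ⟨C, hcard, hrank, hdist⟩ : maxCDCSize F n (2 * (k - r)) k ∈ {M | _} :=
    Nat.sSup_mem ⟨0, ∅, by simp⟩ (bddAbove_cdcSizes F n (2 * (k - r)) k)
  have hC : IsConstantDimensionCode r k ((↑) : C → Submodule F (Fin n → F)) :=
    ⟨fun X => hrank X X.2, fun X Y hne => (le_subspaceDist_iff hr (hrank X X.2) (hrank Y Y.2)).mp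
      (hdist X X.2 Y Y.2 (Subtype.coe_injective.ne hne))⟩
  exact ⟨_, (hC.comp (C.equivFinOfCardEq hcard).symm.injective).map
    (LinearEquiv.ofFinrankEq (Fin n → F) V (by simp [hV]))⟩

/-- The graph of a linear map defined on a subspace `X` of `W`: the lift of `X` to `W × S`. -/
def graphOn (X : Submodule F W) (f : X →ₗ[F] S) : Submodule F (W × S) :=
  range (X.subtype.prod f)

/-- The graph of a linear map `S → W`, with the argument as the second coordinate. -/
def cograph (g : S →ₗ[F] W) : Submodule F (W × S) :=
  range (g.prod LinearMap.id)

theorem finrank_graphOn (X : Submodule F W) (f : X →ₗ[F] S) :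
    finrank F (graphOn X f) = finrank F X :=
  finrank_range_of_inj fun _ _ h => Subtype.ext (congrArg Prod.fst h)

theorem finrank_cograph (g : S →ₗ[F] W) : finrank F (cograph g) = finrank F S :=
  finrank_range_of_inj fun _ _ h => congrArg Prod.snd h

theorem map_fst_graphOn (X : Submodule F W) (f : X →ₗ[F] S) :
    (graphOn X f).map (fst F W S) = X := by
  rw [graphOn, ← range_comp, fst_prod, Submodule.range_subtype]

theorem map_fst_cograph (g : S →ₗ[F] W) : (cograph g).map (fst F W S) = range g := by
  rw [cograph, ← range_comp, fst_prod]

theorem disjoint_graphOn_ker_fst (X : Submodule F W) (f : X →ₗ[F] S) :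
    Disjoint (graphOn X f) (ker (fst F W S)) := by
  rw [Submodule.disjoint_def]
  rintro _ ⟨x, rfl⟩ hx
  obtain rfl : x = 0 := Subtype.ext hx
  exact map_zero _

theorem finrank_graphOn_inf_graphOn_le_finrank_inf [FiniteDimensional F W] {X Y : Submodule F W}
    (f : X →ₗ[F] S) (g : Y →ₗ[F] S) :
    finrank F ↥(graphOn X f ⊓ graphOn Y g) ≤ finrank F ↥(X ⊓ Y) := by
  have h := finrank_inf_le_of_disjoint_ker (graphOn Y g) (disjoint_graphOn_ker_fst X f)
  rwa [map_fst_graphOn, map_fst_graphOn] at h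

theorem finrank_graphOn_inf_graphOn_le_finrank_ker [FiniteDimensional F W] {X : Submodule F W}
    (f g : X →ₗ[F] S) :
    finrank F ↥(graphOn X f ⊓ graphOn X g) ≤ finrank F (ker (f - g)) := by
  refine finrank_range_inf_range_le fun x y hxy => ?_
  obtain rfl : x = y := Subtype.ext (congrArg Prod.fst hxy)
  exact ⟨rfl, congrArg Prod.snd hxy⟩

theorem finrank_cograph_inf_cograph_le [FiniteDimensional F S] (f g : S →ₗ[F] W) :
    finrank F ↥(cograph f ⊓ cograph g) ≤ finrank F (ker (f - g)) := by
  refine finrank_range_inf_range_le fun x y hxy => ?_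
  obtain rfl : x = y := congrArg Prod.snd hxy
  exact ⟨rfl, congrArg Prod.fst hxy⟩

theorem finrank_graphOn_inf_cograph_le [FiniteDimensional F W] (X : Submodule F W)
    (f : X →ₗ[F] S) (g : S →ₗ[F] W) :
    finrank F ↥(graphOn X f ⊓ cograph g) ≤ finrank F (range g) := by
  have h := finrank_inf_le_of_disjoint_ker (cograph g) (disjoint_graphOn_ker_fst X f)
  rw [map_fst_cograph] at h
  exact h.trans (Submodule.finrank_mono inf_le_right)

theorem IsConstantDimensionCode.sumElim_graphOn_cograph [FiniteDimensional F W]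
    [FiniteDimensional F S] {r k : ℕ} (hS : finrank F S = k) {C : ι → Submodule F W}
    (hC : IsConstantDimensionCode r k C) {f : ∀ a, κ → C a →ₗ[F] S}
    (hf : ∀ a, IsRankMetricCode r (f a)) {g : ν → S →ₗ[F] W} (hg : IsRankMetricCode r g)
    (hgr : ∀ b, finrank F (range (g b)) ≤ r) :
    IsConstantDimensionCode r k
      (Sum.elim (fun p : ι × κ => graphOn (C p.1) (f p.1 p.2)) fun b => cograph (g b)) := by
  refine ⟨?_, ?_⟩
  · rintro (p | b)
    · exact (finrank_graphOn _ _).trans (hC.1 p.1)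
    · exact (finrank_cograph _).trans hS
  · rintro (⟨a, m⟩ | b) (⟨a', m'⟩ | b') hne
    · by_cases ha : a = a'
      · subst ha
        have hm : m ≠ m' := fun h => hne (by rw [h])
        exact (finrank_graphOn_inf_graphOn_le_finrank_ker _ _).trans (hf a hm)
      · exact (finrank_graphOn_inf_graphOn_le_finrank_inf _ _).trans (hC.2 ha)
    · exact (finrank_graphOn_inf_cograph_le _ _ _).trans (hgr b')
    · rw [inf_comm]
      exact (finrank_graphOn_inf_cograph_le _ _ _).trans (hgr b)
    · exact (finrank_cograph_inf_cograph_le _ _).trans (hg fun h => hne (congrArg Sum.inr h))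

end Codes

section Gabidulin

open Polynomial FiniteField

variable {F K U S : Type*} [Field F] [Fintype F] [Field K] [Algebra F K] [AddCommGroup U]
  [Module F U] [AddCommGroup S] [Module F S]

variable (F K) in
/-- The linearized polynomial `∑ c i * X ^ q ^ i` as an `F`-linear map on `K`, where `q = |F|`;
these maps form the Gabidulin codes. -/
noncomputable def linearizedMap (m : ℕ) : (Fin m → K) →ₗ[K] (K →ₗ[F] K) :=
  Fintype.linearCombination K fun i : Fin m => (frobeniusAlgHom F K ^ (i : ℕ)).toLinearMap

theorem linearizedMap_apply {m : ℕ} (c : Fin m → K) (x : K) :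
    linearizedMap F K m c x = ∑ i, c i * x ^ Fintype.card F ^ (i : ℕ) := by
  simp [linearizedMap, Fintype.linearCombination_apply, AlgHom.coe_pow, coe_frobeniusAlgHom,
    pow_iterate]

theorem finrank_ker_linearizedMap_le [FiniteDimensional F K] {r : ℕ} {c : Fin (r + 1) → K}
    (hc : c ≠ 0) :
    finrank F (ker (linearizedMap F K (r + 1) c)) ≤ r := by
  let q := Fintype.card F
  have hq : 1 < q := Fintype.one_lt_card
  let P : K[X] := ∑ i, C (c i) * X ^ q ^ (i : ℕ)
  have hcoeff (j : Fin (r + 1)) : P.coeff (q ^ (j : ℕ)) = c j := by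
    simp [P, finsetSum_coeff, coeff_X_pow, Nat.pow_right_inj hq, Fin.val_inj]
  have hP : P ≠ 0 := fun h => hc (funext fun j => by simp [← hcoeff, h])
  have hdeg : P.natDegree ≤ q ^ r := natDegree_sum_le_of_forall_le _ _ fun i _ =>
    (natDegree_C_mul_X_pow_le _ _).trans (Nat.pow_le_pow_right hq.le (Nat.lt_succ_iff.mp i.2))
  have hroots : (ker (linearizedMap F K (r + 1) c) : Set K) ⊆ P.rootSet K := fun x hx => by
    rw [mem_rootSet]
    refine ⟨hP, ?_⟩
    rw [SetLike.mem_coe, mem_ker, linearizedMap_apply] at hx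
    simpa [P] using hx
  have hcard : q ^ finrank F (ker (linearizedMap F K (r + 1) c)) ≤ q ^ r := calc
    q ^ finrank F (ker (linearizedMap F K (r + 1) c))
      = (ker (linearizedMap F K (r + 1) c) : Set K).ncard := by
        simp only [q, ← Nat.card_eq_fintype_card]
        exact Module.natCard_eq_pow_finrank.symm
    _ ≤ (P.rootSet K).ncard := Set.ncard_le_ncard hroots (P.rootSet_finite K)
    _ ≤ q ^ r := (P.ncard_rootSet_le K).trans hdeg
  exact (Nat.pow_le_pow_iff_right hq).mp hcard

theorem isRankMetricCode_linearizedMap [FiniteDimensional F K] (r : ℕ) :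
    IsRankMetricCode r (linearizedMap F K (r + 1)) := fun a b hab => by
  dsimp only
  rw [← map_sub]
  exact finrank_ker_linearizedMap_le (sub_ne_zero.mpr hab)

theorem exists_isRankMetricCode [FiniteDimensional F U] [FiniteDimensional F S] {k : ℕ} [NeZero k]
    (hU : finrank F U = k) (hS : finrank F S = k) (r : ℕ) :
    ∃ f : Fin (Fintype.card F ^ (k * (r + 1))) → U →ₗ[F] S, IsRankMetricCode r f := by
  obtain ⟨p, _⟩ := CharP.exists F
  have : Fact p.Prime := ⟨CharP.char_is_prime F p⟩
  let K := FiniteField.Extension F p k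
  have hK : finrank F K = k := finrank_extension F p k
  have hcard : Nat.card (Fin (r + 1) → K) = Fintype.card F ^ (k * (r + 1)) := by
    rw [Nat.card_fun, natCard_extension, Nat.card_eq_fintype_card, Nat.card_fin, pow_mul]
  let σ := (Finite.equivFinOfCardEq hcard).symm
  exact ⟨_, ((isRankMetricCode_linearizedMap r).comp σ.injective).arrowCongr
    (LinearEquiv.ofFinrankEq K U (hK.trans hU.symm))
    (LinearEquiv.ofFinrankEq K S (hK.trans hS.symm))⟩

end Gabidulin

section Linkage

variable {F W S ν : Type*} [Field F] [Fintype F] [AddCommGroup W] [Module F W]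
  [FiniteDimensional F W] [AddCommGroup S] [Module F S] [FiniteDimensional F S]

theorem IsRankMetricCode.maxCDCSize_mul_add_card_le [Finite ν] {n r k : ℕ} (hr : r < k)
    (hW : finrank F W = n) (hS : finrank F S = k) {g : ν → S →ₗ[F] W}
    (hg : IsRankMetricCode r g) (hgr : ∀ b, finrank F (range (g b)) ≤ r) :
    maxCDCSize F n (2 * (k - r)) k * Fintype.card F ^ (k * (r + 1)) + Nat.card ν ≤
      maxCDCSize F (n + k) (2 * (k - r)) k := by
  have : NeZero k := ⟨by omega⟩
  obtain ⟨C, hC⟩ := exists_isConstantDimensionCode hW hr.le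
  choose f hf using fun a => exists_isRankMetricCode (hC.1 a) hS r
  simpa using (hC.sumElim_graphOn_cograph hS hf hg hgr).card_le_maxCDCSize
    (by rw [finrank_prod, hW, hS]) hr

end Linkage

section Orbits

variable {F K : Type*} [Field F] [Field K] [Algebra F K]

-- Every linearly independent `k`-tuple in `K` is obtained from some `R i` by choosing a scalar in
-- `Kˣ` and the coordinates of a basis of `R i`; count both sides.
theorem prod_le_card_mul_of_forall_exists_smul [Fintype F] [FiniteDimensional F K] {ι : Type*}
    [Finite ι] {k : ℕ} (hk : k ≤ finrank F K) {R : ι → Submodule F K}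
    (hR : ∀ i, finrank F (R i) = k)
    (hcover : ∀ L : Submodule F K, finrank F L = k → ∃ i, ∃ x : Kˣ, L = x • R i) :
    ∏ i : Fin k, (Fintype.card F ^ finrank F K - Fintype.card F ^ (i : ℕ)) ≤
      Nat.card ι * ((Fintype.card F ^ finrank F K - 1) *
        ∏ i : Fin k, (Fintype.card F ^ k - Fintype.card F ^ (i : ℕ))) := by
  have : Finite K := Module.finite_of_finite F
  have hKu : Nat.card Kˣ = Fintype.card F ^ finrank F K - 1 := by
    rw [Nat.card_units, Module.natCard_eq_pow_finrank (K := F), Nat.card_eq_fintype_card]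
  let e i : (Fin k → F) ≃ₗ[F] R i := LinearEquiv.ofFinrankEq _ _ (by simp [hR])
  have hsurj : ∀ s : {s : Fin k → K // LinearIndependent F s},
      ∃ p : ι × Kˣ × {t : Fin k → Fin k → F // LinearIndependent F t},
        ∀ j, s.1 j = p.2.1 • (e p.1 (p.2.2.1 j) : K) := by
    rintro ⟨s, hs⟩
    obtain ⟨i, x, hx⟩ := hcover (Submodule.span F (Set.range s))
      (by rw [finrank_span_eq_card hs, Fintype.card_fin])
    have hmem : ∀ j, ∃ t, x • (e i t : K) = s j := fun j => by
      have hj : s j ∈ x • R i := hx ▸ Submodule.subset_span (Set.mem_range_self j)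
      obtain ⟨y, hy, hxy⟩ := hj
      exact ⟨(e i).symm ⟨y, hy⟩, by rwa [LinearEquiv.apply_symm_apply]⟩
    choose t ht using hmem
    have ht' : LinearIndependent F t := by
      let φ : (Fin k → F) →ₗ[F] K := x • ((R i).subtype ∘ₗ (e i).toLinearMap)
      refine LinearIndependent.of_comp φ ?_
      convert hs using 1
      exact funext ht
    exact ⟨(i, x, ⟨t, ht'⟩), fun j => (ht j).symm⟩
  choose p hp using hsurj
  have hinj : Function.Injective p := fun s s' h => Subtype.ext (funext fun j => by
    rw [hp, hp, h])
  have hle := Nat.card_le_card_of_injective p hinj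
  rw [Nat.card_prod, Nat.card_prod, card_linearIndependent hk, card_linearIndependent (by simp),
    hKu, finrank_fin_fun] at hle
  exact hle

theorem exists_pairwise_notMem_orbit [Fintype F] [FiniteDimensional F K] (ι : Type*) [Finite ι]
    {k : ℕ} (hk : k ≤ finrank F K)
    (hcard : Nat.card ι * ((Fintype.card F ^ finrank F K - 1) *
        ∏ i : Fin k, (Fintype.card F ^ k - Fintype.card F ^ (i : ℕ))) ≤
      ∏ i : Fin k, (Fintype.card F ^ finrank F K - Fintype.card F ^ (i : ℕ))) :
    ∃ L : ι → Submodule F K, (∀ i, finrank F (L i) = k) ∧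
      Pairwise fun i j => L i ∉ MulAction.orbit Kˣ (L j) := by
  have : Finite K := Module.finite_of_finite F
  let π : Submodule F K → MulAction.orbitRel.Quotient Kˣ (Submodule F K) := Quotient.mk _
  let O := π '' {L : Submodule F K | finrank F L = k}
  choose R hR hRO using fun o : O => o.2
  have hπ {L L' : Submodule F K} : π L = π L' ↔ L ∈ MulAction.orbit Kˣ L' :=
    Quotient.eq.trans MulAction.orbitRel_apply
  have hO : Nat.card ι ≤ Nat.card O := by
    refine Nat.le_of_mul_le_mul_right (hcard.trans
      (prod_le_card_mul_of_forall_exists_smul hk hR fun L hL => ?_)) ?_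
    · obtain ⟨x, hx⟩ := hπ.mp (hRO ⟨π L, L, hL, rfl⟩).symm
      exact ⟨_, x, hx.symm⟩
    · have hq : 1 < Fintype.card F := Fintype.one_lt_card
      exact mul_pos (Nat.sub_pos_of_lt (Nat.one_lt_pow finrank_pos.ne' hq))
        (Finset.prod_pos fun i _ => Nat.sub_pos_of_lt (Nat.pow_lt_pow_right hq i.2))
  obtain ⟨σ⟩ : Nonempty (ι ↪ O) := by
    have := Fintype.ofFinite ι
    have := Fintype.ofFinite O
    exact Function.Embedding.nonempty_of_card_le (by simpa only [Nat.card_eq_fintype_card] using hO)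
  refine ⟨R ∘ σ, fun i => hR _, fun i j hij h => hij (σ.injective (Subtype.ext ?_))⟩
  rw [← hRO, ← hRO]
  exact hπ.mpr h

theorem ker_units_smul {S : Type*} [AddCommGroup S] [Module F S] (x : Kˣ) (f : S →ₗ[F] K) :
    ker (x • f) = ker f := by
  ext s
  exact smul_eq_zero_iff_eq x

theorem range_units_smul {S : Type*} [AddCommGroup S] [Module F S] (x : Kˣ) (f : S →ₗ[F] K) :
    range (x • f) = x • range f :=
  range_comp f (DistribSMul.toLinearMap F K x)

theorem finrank_units_smul (x : Kˣ) (L : Submodule F K) :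
    finrank F ↥(x • L) = finrank F L :=
  (DistribMulAction.toLinearEquiv F K x).finrank_map_eq L

end Orbits

section Parallelism

variable {F K S ι κ : Type*} [Field F] [Field K] [Algebra F K] [AddCommGroup S] [Module F S]

/-- A partial parallelism of lines of the projective space of `S`: disjoint partial spreads
`P i`, each consisting of pairwise disjoint two-dimensional subspaces `P i j`. -/
structure IsPartialParallelism (P : ι → κ → Submodule F S) : Prop where
  ne : Pairwise fun i i' => ∀ j j', P i j ≠ P i' j'
  disjoint : ∀ i, Pairwise fun j j' => Disjoint (P i j) (P i j')
  finrank_eq : ∀ i j, finrank F (P i j) = 2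

/-- The zero map and all multiples of the maps `ρ i j` by nonzero elements of `K`; `none` stands for
the zero map. -/
def orbitCode (ρ : ι → κ → S →ₗ[F] K) : Option (ι × κ × Kˣ) → S →ₗ[F] K
  | none => 0
  | some (i, j, x) => x • ρ i j

theorem finrank_ker_units_smul_sub_units_smul_le [FiniteDimensional F K] [FiniteDimensional F S]
    {ρ : ι → κ → S →ₗ[F] K} (hP : IsPartialParallelism fun i j => ker (ρ i j))
    {L : ι → Submodule F K} (hL : ∀ i, finrank F (L i) = 2)
    (hLorbit : Pairwise fun i i' => L i ∉ MulAction.orbit Kˣ (L i'))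
    (hrange : ∀ i j, range (ρ i j) = L i)
    {i i' : ι} {j j' : κ} {x x' : Kˣ} (hne : (i, j, x) ≠ (i', j', x')) :
    finrank F (ker (x • ρ i j - x' • ρ i' j')) ≤ 2 := by
  have hle := finrank_ker_sub_le (x • ρ i j) (x' • ρ i' j')
  rw [ker_units_smul, ker_units_smul, range_units_smul, range_units_smul,
    hrange, hrange] at hle
  have hL2 (i) (x : Kˣ) : finrank F ↥(x • L i) = 2 := (finrank_units_smul x _).trans (hL i)
  by_cases hi : i = i'
  · subst hi
    by_cases hj : j = j'
    · subst hj
      have hx : (x : K) - x' ≠ 0 := sub_ne_zero.mpr fun h => hne (by rw [Units.ext h])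
      have hsub : x • ρ i j - x' • ρ i j = Units.mk0 _ hx • ρ i j := by
        ext s
        simp [sub_mul, Units.smul_def]
      rw [hsub, ker_units_smul, hP.finrank_eq]
    · have hrank := Submodule.finrank_mono (inf_le_left : x • L i ⊓ x' • L i ≤ _)
      rw [(hP.disjoint i hj).eq_bot, finrank_bot] at hle
      rw [hL2] at hrank
      omega
  · have hLinf := finrank_inf_lt_of_ne (A := x • L i) (B := x' • L i') (by simp only [hL2])
      fun h => hLorbit hi ⟨x⁻¹ * x', by simp only [mul_smul, ← h, inv_smul_smul]⟩
    have hPinf := finrank_inf_lt_of_ne (A := ker (ρ i j)) (B := ker (ρ i' j'))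
      (by simp only [hP.finrank_eq]) (hP.ne hi j j')
    rw [hL2] at hLinf
    rw [hP.finrank_eq] at hPinf
    omega

theorem isRankMetricCode_orbitCode [FiniteDimensional F K] [FiniteDimensional F S]
    {ρ : ι → κ → S →ₗ[F] K} (hP : IsPartialParallelism fun i j => ker (ρ i j))
    {L : ι → Submodule F K} (hL : ∀ i, finrank F (L i) = 2)
    (hLorbit : Pairwise fun i i' => L i ∉ MulAction.orbit Kˣ (L i'))
    (hrange : ∀ i j, range (ρ i j) = L i) :
    IsRankMetricCode 2 (orbitCode ρ) := by
  rintro (_ | ⟨i, j, x⟩) (_ | ⟨i', j', x'⟩) hne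
  · exact absurd rfl hne
  · have hker : finrank F (ker (0 - x' • ρ i' j')) = 2 := by
      rw [zero_sub, LinearMap.ker_neg, ker_units_smul, hP.finrank_eq]
    exact hker.le
  · have hker : finrank F (ker (x • ρ i j - 0)) = 2 := by
      rw [sub_zero, ker_units_smul, hP.finrank_eq]
    exact hker.le
  · exact finrank_ker_units_smul_sub_units_smul_le hP hL hLorbit hrange
      fun h => hne (congrArg some h)

theorem finrank_range_orbitCode_le {r : ℕ} {ρ : ι → κ → S →ₗ[F] K}
    (hρ : ∀ i j, finrank F (range (ρ i j)) ≤ r) :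
    ∀ a, finrank F (range (orbitCode ρ a)) ≤ r
  | none => by
    rw [orbitCode, range_zero, finrank_bot]
    exact r.zero_le
  | some (i, j, x) => by
    rw [orbitCode, range_units_smul, finrank_units_smul]
    exact hρ i j

theorem IsPartialParallelism.maxCDCSize_mul_add_le [Fintype F] [Fintype ι] [Fintype κ]
    [FiniteDimensional F S] (hS : finrank F S = 4) {P : ι → κ → Submodule F S}
    (hP : IsPartialParallelism P) {n : ℕ} (hn : 2 ≤ n)
    (hcard : Fintype.card ι * ((Fintype.card F ^ 2 - 1) * (Fintype.card F ^ 2 - Fintype.card F)) ≤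
      Fintype.card F ^ n - Fintype.card F) :
    maxCDCSize F n 4 4 * Fintype.card F ^ 12 + 1 +
        Fintype.card ι * Fintype.card κ * (Fintype.card F ^ n - 1) ≤
      maxCDCSize F (n + 4) 4 4 := by
  obtain ⟨p, _⟩ := CharP.exists F
  have : Fact p.Prime := ⟨CharP.char_is_prime F p⟩
  have : NeZero n := ⟨by omega⟩
  let K := FiniteField.Extension F p n
  have hK : finrank F K = n := FiniteField.finrank_extension F p n
  obtain ⟨L, hL, hLorbit⟩ := exists_pairwise_notMem_orbit (F := F) (K := K) ι (hn.trans_eq hK.symm)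
    (by
      rw [Fin.prod_univ_two, Fin.prod_univ_two, hK, Nat.card_eq_fintype_card]
      simpa [mul_left_comm] using Nat.mul_le_mul_left (Fintype.card F ^ n - 1) hcard)
  choose ρ hker hrange using fun i j => exists_ker_eq_range_eq (P := P i j) (L := L i)
    (by rw [hP.finrank_eq, hL, hS])
  obtain rfl : P = fun i j => ker (ρ i j) := funext₂ fun i j => (hker i j).symm
  have hcode := isRankMetricCode_orbitCode hP hL hLorbit hrange
  have hrank := finrank_range_orbitCode_le (ρ := ρ) (r := 2) fun i j => by rw [hrange, hL]
  have hcount : Nat.card (Option (ι × κ × Kˣ)) =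
      1 + Fintype.card ι * Fintype.card κ * (Fintype.card F ^ n - 1) := by
    rw [Finite.card_option, add_comm, Nat.card_prod, Nat.card_prod, Nat.card_units,
      FiniteField.natCard_extension, ← mul_assoc, Nat.card_eq_fintype_card,
      Nat.card_eq_fintype_card, Nat.card_eq_fintype_card]
  have h := hcode.maxCDCSize_mul_add_card_le (by norm_num) hK hS hrank
  rw [hcount, ← add_assoc] at h
  exact h

end Parallelism

section Binary

/-- The powers `α ^ i` of a root `α` of `X ^ 3 + X + 1`, embedded in `F_2^4 = F_2 ⊕ F_8` by their
coordinates with respect to `1, α, α ^ 2`. -/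
def alphaPow : Fin 7 → Fin 4 → ZMod 2 :=
  ![![0, 1, 0, 0], ![0, 0, 1, 0], ![0, 0, 0, 1], ![0, 1, 1, 0], ![0, 0, 1, 1], ![0, 1, 1, 1],
    ![0, 1, 0, 1]]

/-- Bases of the five lines of the `i`-th spread in a parallelism of `F_2^4 = F_2 ⊕ F_8`: the `i`-th
spread is the image of the first one under multiplication by `α ^ i` on `F_8`. -/
def binaryParallelismBasis (i : Fin 7) : Fin 5 → Fin 2 → Fin 4 → ZMod 2 :=
  let e : Fin 4 → ZMod 2 := ![1, 0, 0, 0]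
  ![![e, alphaPow i], ![alphaPow (i + 1), alphaPow (i + 2)],
    ![alphaPow (i + 3), e + alphaPow (i + 2)], ![alphaPow (i + 6), e + alphaPow (i + 4)],
    ![alphaPow (i + 5), e + alphaPow (i + 1)]]

theorem linearIndependent_binaryParallelismBasis (i : Fin 7) (j : Fin 5) :
    LinearIndependent (ZMod 2) (binaryParallelismBasis i j) := by
  rw [Fintype.linearIndependent_iff]
  revert i j
  decide +kernel

theorem isPartialParallelism_binary :
    IsPartialParallelism fun i j =>
      Submodule.span (ZMod 2) (Set.range (binaryParallelismBasis i j)) where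
  finrank_eq i j := finrank_span_eq_card (linearIndependent_binaryParallelismBasis i j)
  disjoint i j j' hj := by
    simp only [Submodule.disjoint_def, Submodule.mem_span_range_iff_exists_fun]
    revert i j j'
    decide +kernel
  ne i i' hi j j' h := by
    have hmem (l : Fin 2) : ∃ c : Fin 2 → ZMod 2,
        ∑ m, c m • binaryParallelismBasis i' j' m = binaryParallelismBasis i j l := by
      rw [← Submodule.mem_span_range_iff_exists_fun]
      exact h ▸ Submodule.subset_span (Set.mem_range_self l)
    clear h
    revert i i' j j'
    decide +kernel

end Binary

theorem A2_12_4_4_lower_bound_general {n : ℕ} (hn : 6 ≤ n) :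
    maxCDCSize (ZMod 2) n 4 4 * 2 ^ 12 + 1 + 35 * (2 ^ n - 1) ≤
      maxCDCSize (ZMod 2) (n + 4) 4 4 := by
  have hpow : 2 ^ 6 ≤ 2 ^ n := Nat.pow_le_pow_right two_pos hn
  simpa using isPartialParallelism_binary.maxCDCSize_mul_add_le (n := n) (by simp) (by omega)
    (by simp only [ZMod.card, Fintype.card_fin]; omega)

/-- If `A_2(8, 4, 4) ≥ 4801`, then `A_2(12, 4, 4) ≥ 19673822 = 4801·2^{12} + 1 + 8925`. -/
theorem A2_12_4_4_lower_bound (h : 4801 ≤ maxCDCSize (ZMod 2) 8 4 4) :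
    19673822 ≤ maxCDCSize (ZMod 2) 12 4 4 ∧
    (19673822 : ℕ) = 4801 * 2 ^ 12 + 1 + 8925 := by
  have h8 : _ ≤ maxCDCSize (ZMod 2) 12 4 4 := A2_12_4_4_lower_bound_general (n := 8) (by norm_num)
  omega
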